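/- arXiv:math/0411637 — 2 statements merged into one kernel-verified Lean document; each statement's English description precedes it below -/
import Mathlib

section
/- Let 𝕂 = ℝ or ℂ and let n ≥ 2. Let G_{j1,j2}, H_{j1,j2}^{k1}, L_{j1}^{k1}, M^{k1} be 𝕂-analytic functions of (x,y) ∈ 𝕂^n × 𝕂 near the origin with G_{j1,j2} = G_{j2,j1} and H_{j1,j2}^{k1} = H_{j2,j1}^{k1}, and let F^{j1,j2} be the associated cubic system. Then the compatibility conditions D_{x^{j3}}(F^{j1,j2}) = D_{x^{j2}}(F^{j1,j3}) hold identically in (x, y, p) for all j1, j2, j3 ∈ {1, …, n} — where D_{x^j} := ∂/∂x^j + p_j ∂/∂y + Σ_{l=1}^n F^{j,l} ∂/∂p_l — if and only if the functions G, H, L, M satisfy the four first-order systems (I′), (II′), (III′), (IV′) at every point (x,y) of the domain. -/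
/-!
The equivalence holds at each base point `(x, y)` separately. There the difference
`D_{x^c} F^{a,b} - D_{x^b} F^{a,c}` is a polynomial in `p` whose coefficients are built from the
values and the first derivatives of `G, H, L, M`. A priori its degree is five, but the part of
`D_{x^c} F^{a,b}` of degree four and five in `p` is symmetric in `(b, c)`, so the difference is at
most cubic (`CubicCoeff.tot_sub_tot`). Over a field of characteristic zero such a
polynomial vanishes for all `p` iff each homogeneous component does, and by polarization iff the
symmetrized coefficients of each component are zero (`CubicCoeff.cubic_eq_zero_iff`). The
coefficients of degrees `0, 1, 2, 3`, the last two symmetrized over `S_2` and `S_3`, are exactly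
the right-hand sides of the four first-order systems (`coeff_eq_zero_iff`).
-/

noncomputable section
open scoped BigOperators

/-- Points (x, y) ∈ 𝕂ⁿ × 𝕂. -/
abbrev Pt (𝕂 : Type) (n : ℕ) := (Fin n → 𝕂) × 𝕂

/-- First-order jet points (x, y, p) ∈ 𝕂ⁿ × 𝕂 × 𝕂ⁿ. -/
abbrev Jet (𝕂 : Type) (n : ℕ) := (Fin n → 𝕂) × 𝕂 × (Fin n → 𝕂)

variable {𝕂 : Type} [RCLike 𝕂] {n : ℕ}

/-- Kronecker delta. -/
def kd (K : Type) [Zero K] [One K] {m : ℕ} (a b : Fin m) : K := if a = b then 1 else 0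

/-- ∂f/∂xʲ for a function of (x, y). -/
def px (f : Pt 𝕂 n → 𝕂) (j : Fin n) (z : Pt 𝕂 n) : 𝕂 := fderiv 𝕂 f z (Pi.single j 1, 0)

/-- ∂f/∂y for a function of (x, y). -/
def py (f : Pt 𝕂 n → 𝕂) (z : Pt 𝕂 n) : 𝕂 := fderiv 𝕂 f z (0, 1)

/-- ∂F/∂xʲ for a function of (x, y, p). -/
def jx (F : Jet 𝕂 n → 𝕂) (j : Fin n) (z : Jet 𝕂 n) : 𝕂 := fderiv 𝕂 F z (Pi.single j 1, 0, 0)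

/-- ∂F/∂y for a function of (x, y, p). -/
def jy (F : Jet 𝕂 n → 𝕂) (z : Jet 𝕂 n) : 𝕂 := fderiv 𝕂 F z (0, 1, 0)

/-- ∂F/∂p_l for a function of (x, y, p). -/
def jp (F : Jet 𝕂 n → 𝕂) (l : Fin n) (z : Jet 𝕂 n) : 𝕂 := fderiv 𝕂 F z (0, 0, Pi.single l 1)

/-- The total differentiation operator D_{xʲ} = ∂/∂xʲ + p_j ∂/∂y + Σ_l F^{j,l} ∂/∂p_l. -/
def Dtot (F : Fin n → Fin n → Jet 𝕂 n → 𝕂) (j : Fin n) (f : Jet 𝕂 n → 𝕂) (z : Jet 𝕂 n) : 𝕂 :=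
  jx f j z + z.2.2 j * jy f z + ∑ l, F j l z * jp f l z

/-- A completely integrable system of second-order PDEs, given by analytic right-hand
sides `F j1 j2` on a neighborhood `Ω` of the origin of the jet space. -/
structure CompletelyIntegrable (F : Fin n → Fin n → Jet 𝕂 n → 𝕂) (Ω : Set (Jet 𝕂 n)) : Prop where
  isOpen : IsOpen Ω
  zero_mem : (0 : Jet 𝕂 n) ∈ Ω
  analytic : ∀ j1 j2, AnalyticOnNhd 𝕂 (F j1 j2) Ω
  symm : ∀ j1 j2, F j1 j2 = F j2 j1
  compat : ∀ j1 j2 j3 : Fin n, ∀ z ∈ Ω, Dtot F j3 (F j1 j2) z = Dtot F j2 (F j1 j3) z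

/-- Gradient (y_{x¹}, …, y_{xⁿ}) of a function of x. -/
def gradv (u : (Fin n → 𝕂) → 𝕂) (x : Fin n → 𝕂) : Fin n → 𝕂 :=
  fun j => fderiv 𝕂 u x (Pi.single j 1)

/-- Second-order partial derivative y_{xʲxᵏ}. -/
def pdd (u : (Fin n → 𝕂) → 𝕂) (j k : Fin n) (x : Fin n → 𝕂) : 𝕂 :=
  fderiv 𝕂 (fun x' => fderiv 𝕂 u x' (Pi.single j 1)) x (Pi.single k 1)

/-- `u` solves the system `y_{x^{j1}x^{j2}} = F^{j1,j2}(x, y, ∇y)` on `Ω'`. -/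
def Solves (F : Fin n → Fin n → Jet 𝕂 n → 𝕂) (Ω : Set (Jet 𝕂 n))
    (u : (Fin n → 𝕂) → 𝕂) (Ω' : Set (Fin n → 𝕂)) : Prop :=
  ∀ x ∈ Ω', (x, u x, gradv u x) ∈ Ω ∧
    ∀ j1 j2 : Fin n, pdd u j1 j2 x = F j1 j2 (x, u x, gradv u x)

/-- `Φ` is a 𝕂-analytic diffeomorphism between neighborhoods `U`, `V` of the origin. -/
def IsAnalyticDiffeoAtOrigin (Φ : Pt 𝕂 n → Pt 𝕂 n) (U V : Set (Pt 𝕂 n)) : Prop :=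
  IsOpen U ∧ IsOpen V ∧ (0 : Pt 𝕂 n) ∈ U ∧ (0 : Pt 𝕂 n) ∈ V ∧
    AnalyticOnNhd 𝕂 Φ U ∧ Φ '' U = V ∧
    ∃ Ψ : Pt 𝕂 n → Pt 𝕂 n, AnalyticOnNhd 𝕂 Ψ V ∧
      (∀ z ∈ U, Ψ (Φ z) = z) ∧ (∀ w ∈ V, Φ (Ψ w) = w)

/-- The system `F` (with jet domain `Ω`) is equivalent, under a local 𝕂-analytic change of
coordinates `(x,y) ↦ (X(x,y), Y(x,y))`, to the simplest system `Y_{X^{j1}X^{j2}} = 0`. -/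
def EquivToFlat (F : Fin n → Fin n → Jet 𝕂 n → 𝕂) (Ω : Set (Jet 𝕂 n)) : Prop :=
  ∃ (U V : Set (Pt 𝕂 n)) (Φ : Pt 𝕂 n → Pt 𝕂 n),
    IsAnalyticDiffeoAtOrigin Φ U V ∧
    ∀ (Ω' : Set (Fin n → 𝕂)) (u : (Fin n → 𝕂) → 𝕂),
      IsOpen Ω' → AnalyticOnNhd 𝕂 u Ω' →
      (∀ x ∈ Ω', (x, u x) ∈ U) →
      (∀ x ∈ Ω', (fderiv 𝕂 (fun x' => (Φ (x', u x')).1) x).det ≠ 0) →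
      (Solves F Ω u Ω' ↔
        ∀ (Yh : (Fin n → 𝕂) → 𝕂) (W : Set (Fin n → 𝕂)),
          IsOpen W → AnalyticOnNhd 𝕂 Yh W →
          (∀ x ∈ Ω', (Φ (x, u x)).1 ∈ W) →
          (∀ x ∈ Ω', Yh ((Φ (x, u x)).1) = (Φ (x, u x)).2) →
          ∀ x ∈ Ω', ∀ j k : Fin n, pdd Yh j k ((Φ (x, u x)).1) = 0)

/-- The cubic right-hand side associated with data G, H, L, M. -/
def cubicF (G : Fin n → Fin n → Pt 𝕂 n → 𝕂) (H : Fin n → Fin n → Fin n → Pt 𝕂 n → 𝕂)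
    (L : Fin n → Fin n → Pt 𝕂 n → 𝕂) (M : Fin n → Pt 𝕂 n → 𝕂)
    (j1 j2 : Fin n) (z : Jet 𝕂 n) : 𝕂 :=
  G j1 j2 (z.1, z.2.1) + ∑ k, z.2.2 k *
    (H j1 j2 k (z.1, z.2.1) + (1/2 : 𝕂) * z.2.2 j1 * L j2 k (z.1, z.2.1)
      + (1/2 : 𝕂) * z.2.2 j2 * L j1 k (z.1, z.2.1)
      + z.2.2 j1 * z.2.2 j2 * M k (z.1, z.2.1))

/-- System (I′), at the point z. -/
def EqI (G : Fin n → Fin n → Pt 𝕂 n → 𝕂) (H : Fin n → Fin n → Fin n → Pt 𝕂 n → 𝕂)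
    (z : Pt 𝕂 n) : Prop :=
  ∀ j1 j2 j3 : Fin n,
    0 = px (G j1 j2) j3 z - px (G j1 j3) j2 z
      + (∑ k, H j1 j2 k z * G k j3 z) - ∑ k, H j1 j3 k z * G k j2 z

/-- System (II′), at the point z. -/
def EqII (G : Fin n → Fin n → Pt 𝕂 n → 𝕂) (H : Fin n → Fin n → Fin n → Pt 𝕂 n → 𝕂)
    (L : Fin n → Fin n → Pt 𝕂 n → 𝕂) (z : Pt 𝕂 n) : Prop :=
  ∀ j1 j2 j3 k1 : Fin n,
    0 = kd 𝕂 j3 k1 * py (G j1 j2) z - kd 𝕂 j2 k1 * py (G j1 j3) z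
      + px (H j1 j2 k1) j3 z - px (H j1 j3 k1) j2 z
      + (1/2 : 𝕂) * G j1 j3 z * L j2 k1 z - (1/2 : 𝕂) * G j1 j2 z * L j3 k1 z
      + (1/2 : 𝕂) * kd 𝕂 j1 k1 * (∑ k, (G k j3 z * L j2 k z - G k j2 z * L j3 k z))
      + (1/2 : 𝕂) * kd 𝕂 j2 k1 * (∑ k, G k j3 z * L j1 k z)
      - (1/2 : 𝕂) * kd 𝕂 j3 k1 * (∑ k, G k j2 z * L j1 k z)
      + ∑ k, (H k j3 k1 z * H j1 j2 k z - H k j2 k1 z * H j1 j3 k z)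

/-- System (III′), at the point z. -/
def EqIII (G : Fin n → Fin n → Pt 𝕂 n → 𝕂) (H : Fin n → Fin n → Fin n → Pt 𝕂 n → 𝕂)
    (L : Fin n → Fin n → Pt 𝕂 n → 𝕂) (M : Fin n → Pt 𝕂 n → 𝕂) (z : Pt 𝕂 n) : Prop :=
  ∀ (j1 j2 j3 : Fin n) (kk : Fin 2 → Fin n),
    0 = ∑ σ : Equiv.Perm (Fin 2),
      (kd 𝕂 j3 (kk (σ 1)) * py (H j1 j2 (kk (σ 0))) z
        - kd 𝕂 j2 (kk (σ 1)) * py (H j1 j3 (kk (σ 0))) z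
        + (1/2 : 𝕂) * kd 𝕂 j2 (kk (σ 1)) * px (L j1 (kk (σ 0))) j3 z
        - (1/2 : 𝕂) * kd 𝕂 j3 (kk (σ 1)) * px (L j1 (kk (σ 0))) j2 z
        + (1/2 : 𝕂) * kd 𝕂 j1 (kk (σ 1)) * px (L j2 (kk (σ 0))) j3 z
        - (1/2 : 𝕂) * kd 𝕂 j1 (kk (σ 1)) * px (L j3 (kk (σ 0))) j2 z
        + kd 𝕂 j2 (kk (σ 1)) * G j1 j3 z * M (kk (σ 0)) z
        - kd 𝕂 j3 (kk (σ 1)) * G j1 j2 z * M (kk (σ 0)) z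
        + kd 𝕂 j1 (kk (σ 0)) * kd 𝕂 j2 (kk (σ 1)) * (∑ k, G k j3 z * M k z)
        - kd 𝕂 j1 (kk (σ 0)) * kd 𝕂 j3 (kk (σ 1)) * (∑ k, G k j2 z * M k z)
        + (1/2 : 𝕂) * kd 𝕂 j1 (kk (σ 0)) *
            (∑ k, (H k j3 (kk (σ 1)) z * L j2 k z - H k j2 (kk (σ 1)) z * L j3 k z))
        + (1/2 : 𝕂) * kd 𝕂 j2 (kk (σ 0)) * (∑ k, H k j3 (kk (σ 1)) z * L j1 k z)
        - (1/2 : 𝕂) * kd 𝕂 j3 (kk (σ 0)) * (∑ k, H k j2 (kk (σ 1)) z * L j1 k z)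
        + (1/2 : 𝕂) * kd 𝕂 j3 (kk (σ 0)) * (∑ k, H j1 j2 k z * L k (kk (σ 1)) z)
        - (1/2 : 𝕂) * kd 𝕂 j2 (kk (σ 0)) * (∑ k, H j1 j3 k z * L k (kk (σ 1)) z))

/-- System (IV′), at the point z. -/
def EqIV (H : Fin n → Fin n → Fin n → Pt 𝕂 n → 𝕂)
    (L : Fin n → Fin n → Pt 𝕂 n → 𝕂) (M : Fin n → Pt 𝕂 n → 𝕂) (z : Pt 𝕂 n) : Prop :=
  ∀ (j1 j2 j3 : Fin n) (kk : Fin 3 → Fin n),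
    0 = ∑ σ : Equiv.Perm (Fin 3),
      ((1/2 : 𝕂) * kd 𝕂 j3 (kk (σ 2)) * kd 𝕂 j1 (kk (σ 1)) * py (L j2 (kk (σ 0))) z
        - (1/2 : 𝕂) * kd 𝕂 j2 (kk (σ 2)) * kd 𝕂 j1 (kk (σ 1)) * py (L j3 (kk (σ 0))) z
        + kd 𝕂 j2 (kk (σ 2)) * kd 𝕂 j1 (kk (σ 1)) * px (M (kk (σ 0))) j3 z
        - kd 𝕂 j3 (kk (σ 2)) * kd 𝕂 j1 (kk (σ 1)) * px (M (kk (σ 0))) j2 z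
        + kd 𝕂 j2 (kk (σ 2)) * kd 𝕂 j1 (kk (σ 0)) * (∑ k, H k j3 (kk (σ 1)) z * M k z)
        - kd 𝕂 j3 (kk (σ 2)) * kd 𝕂 j1 (kk (σ 0)) * (∑ k, H k j2 (kk (σ 1)) z * M k z)
        + (1/4 : 𝕂) * kd 𝕂 j1 (kk (σ 0)) * kd 𝕂 j3 (kk (σ 2)) *
            (∑ k, L k (kk (σ 1)) z * L j2 k z)
        - (1/4 : 𝕂) * kd 𝕂 j1 (kk (σ 0)) * kd 𝕂 j2 (kk (σ 2)) *
            (∑ k, L k (kk (σ 1)) z * L j3 k z))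

/-- The values at one point of the coefficients `(G, H, L, M)` of a cubic system; the same type
also records the values of their partial derivatives in a fixed direction. -/
structure CubicCoeff (K : Type) (n : ℕ) where
  /-- the coefficient of degree zero in `p` -/
  G : Fin n → Fin n → K
  /-- the linear coefficient -/
  H : Fin n → Fin n → Fin n → K
  /-- the quadratic coefficient -/
  L : Fin n → Fin n → K
  /-- the cubic coefficient -/
  M : Fin n → K

/-! ### Algebra at a fixed point -/

namespace CubicCoeff

variable {K : Type} [Field K] {m : ℕ}

/-- The cubic polynomial `F^{a,b}` in `p` with coefficients `D`. -/
def ev (D : CubicCoeff K m) (p : Fin m → K) (a b : Fin m) : K :=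
  D.G a b + p ⬝ᵥ D.H a b + (1/2) * p a * (p ⬝ᵥ D.L b) + (1/2) * p b * (p ⬝ᵥ D.L a)
    + p a * p b * (p ⬝ᵥ D.M)

/-- The partial derivative `∂F^{a,b}/∂p_l`. -/
def evp (D : CubicCoeff K m) (p : Fin m → K) (a b l : Fin m) : K :=
  D.H a b l + (1/2) * kd K a l * (p ⬝ᵥ D.L b) + (1/2) * p a * D.L b l
    + (1/2) * kd K b l * (p ⬝ᵥ D.L a) + (1/2) * p b * D.L a l
    + kd K a l * p b * (p ⬝ᵥ D.M) + kd K b l * p a * (p ⬝ᵥ D.M) + p a * p b * D.M l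

/-- The total derivative `D_{x^c} F^{a,b}`, in terms of the values `D` of the coefficients, their
`x^c`-derivatives `Dx c` and their `y`-derivatives `Dy`. -/
def tot (D : CubicCoeff K m) (Dx : Fin m → CubicCoeff K m) (Dy : CubicCoeff K m)
    (p : Fin m → K) (a b c : Fin m) : K :=
  (Dx c).ev p a b + p c * Dy.ev p a b + ∑ l, D.ev p c l * D.evp p a b l

/-- The coefficient of degree zero of `D_{x^c} F^{a,b} - D_{x^b} F^{a,c}`. -/
def c0 (D : CubicCoeff K m) (Dx : Fin m → CubicCoeff K m) (a b c : Fin m) : K :=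
  (Dx c).G a b - (Dx b).G a c + (∑ k, D.H a b k * D.G k c) - ∑ k, D.H a c k * D.G k b

/-- The coefficient of `p_i` in `D_{x^c} F^{a,b} - D_{x^b} F^{a,c}`. -/
def c1 (D : CubicCoeff K m) (Dx : Fin m → CubicCoeff K m) (Dy : CubicCoeff K m)
    (a b c i : Fin m) : K :=
  kd K c i * Dy.G a b - kd K b i * Dy.G a c
    + (Dx c).H a b i - (Dx b).H a c i
    + (1/2) * D.G a c * D.L b i - (1/2) * D.G a b * D.L c i
    + (1/2) * kd K a i * (∑ k, (D.G k c * D.L b k - D.G k b * D.L c k))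
    + (1/2) * kd K b i * (∑ k, D.G k c * D.L a k)
    - (1/2) * kd K c i * (∑ k, D.G k b * D.L a k)
    + ∑ k, (D.H k c i * D.H a b k - D.H k b i * D.H a c k)

/-- A coefficient of `p_i p_j` in `D_{x^c} F^{a,b} - D_{x^b} F^{a,c}`, not symmetrized
in `(i, j)`. -/
def c2 (D : CubicCoeff K m) (Dx : Fin m → CubicCoeff K m) (Dy : CubicCoeff K m)
    (a b c i j : Fin m) : K :=
  kd K c j * Dy.H a b i - kd K b j * Dy.H a c i
    + (1/2) * kd K b j * (Dx c).L a i - (1/2) * kd K c j * (Dx b).L a i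
    + (1/2) * kd K a j * (Dx c).L b i - (1/2) * kd K a j * (Dx b).L c i
    + kd K b j * D.G a c * D.M i - kd K c j * D.G a b * D.M i
    + kd K a i * kd K b j * (∑ k, D.G k c * D.M k)
    - kd K a i * kd K c j * (∑ k, D.G k b * D.M k)
    + (1/2) * kd K a i * (∑ k, (D.H k c j * D.L b k - D.H k b j * D.L c k))
    + (1/2) * kd K b i * (∑ k, D.H k c j * D.L a k)
    - (1/2) * kd K c i * (∑ k, D.H k b j * D.L a k)
    + (1/2) * kd K c i * (∑ k, D.H a b k * D.L k j)
    - (1/2) * kd K b i * (∑ k, D.H a c k * D.L k j)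

/-- A coefficient of `p_i p_j p_q` in `D_{x^c} F^{a,b} - D_{x^b} F^{a,c}`, not symmetrized
in `(i, j, q)`. -/
def c3 (D : CubicCoeff K m) (Dx : Fin m → CubicCoeff K m) (Dy : CubicCoeff K m)
    (a b c i j q : Fin m) : K :=
  (1/2) * kd K c q * kd K a j * Dy.L b i - (1/2) * kd K b q * kd K a j * Dy.L c i
    + kd K b q * kd K a j * (Dx c).M i - kd K c q * kd K a j * (Dx b).M i
    + kd K b q * kd K a i * (∑ k, D.H k c j * D.M k)
    - kd K c q * kd K a i * (∑ k, D.H k b j * D.M k)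
    + (1/4) * kd K a i * kd K c q * (∑ k, D.L k j * D.L b k)
    - (1/4) * kd K a i * kd K b q * (∑ k, D.L k j * D.L c k)

lemma dot_kd (p : Fin m → K) (a : Fin m) : p ⬝ᵥ kd K a = p a := by
  simp [dotProduct, kd]

lemma sum_kd (f : Fin m → K) (a : Fin m) : ∑ l, f l * kd K a l = f a := by
  simp [kd]

lemma dot_sum (p : Fin m → K) (A : Fin m → Fin m → K) (v : Fin m → K) :
    (p ⬝ᵥ fun i => ∑ k, A k i * v k) = ∑ k, (p ⬝ᵥ A k) * v k := by
  simp only [dotProduct, Finset.mul_sum, Finset.sum_mul]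
  rw [Finset.sum_comm]
  simp only [mul_assoc]

/-- Contraction of `F^{c,·}` with a vector. -/
lemma sum_ev_mul (D : CubicCoeff K m) (hG : ∀ a b, D.G a b = D.G b a)
    (hH : ∀ a b, D.H a b = D.H b a) (p V : Fin m → K) (c : Fin m) :
    ∑ l, D.ev p c l * V l = (∑ l, D.G l c * V l) + (∑ l, (p ⬝ᵥ D.H l c) * V l)
      + (1/2) * p c * (∑ l, (p ⬝ᵥ D.L l) * V l) + (1/2) * (p ⬝ᵥ V) * (p ⬝ᵥ D.L c)
      + p c * (p ⬝ᵥ V) * (p ⬝ᵥ D.M) := by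
  simp only [dotProduct.eq_1 p V, Finset.mul_sum, Finset.sum_mul, ← Finset.sum_add_distrib]
  refine Finset.sum_congr rfl fun l _ => ?_
  rw [ev, hG c l, hH c l]
  ring

lemma sum_ev_mul_evp (D : CubicCoeff K m) (p : Fin m → K) (a b c : Fin m) :
    ∑ l, D.ev p c l * D.evp p a b l =
      (∑ l, D.ev p c l * D.H a b l) + (1/2) * (p ⬝ᵥ D.L b) * D.ev p c a
      + (1/2) * p a * (∑ l, D.ev p c l * D.L b l) + (1/2) * (p ⬝ᵥ D.L a) * D.ev p c b
      + (1/2) * p b * (∑ l, D.ev p c l * D.L a l) + p b * (p ⬝ᵥ D.M) * D.ev p c a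
      + p a * (p ⬝ᵥ D.M) * D.ev p c b + p a * p b * (∑ l, D.ev p c l * D.M l) := by
  rw [← sum_kd (D.ev p c) a, ← sum_kd (D.ev p c) b]
  simp only [Finset.mul_sum, ← Finset.sum_add_distrib]
  refine Finset.sum_congr rfl fun l _ => ?_
  simp only [evp]
  ring

lemma dot_fun_add (p f g : Fin m → K) : (p ⬝ᵥ fun i => f i + g i) = p ⬝ᵥ f + p ⬝ᵥ g :=
  dotProduct_add p f g

lemma dot_fun_sub (p f g : Fin m → K) : (p ⬝ᵥ fun i => f i - g i) = p ⬝ᵥ f - p ⬝ᵥ g :=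
  dotProduct_sub p f g

lemma dot_const_mul (p f : Fin m → K) (s : K) : (p ⬝ᵥ fun i => s * f i) = s * (p ⬝ᵥ f) :=
  dotProduct_smul s p f

lemma dot_mul_const (p f : Fin m → K) (s : K) : (p ⬝ᵥ fun i => f i * s) = (p ⬝ᵥ f) * s := by
  simp only [mul_comm _ s, dot_const_mul]

lemma dot_sum' (p : Fin m → K) (A : Fin m → Fin m → K) (v : Fin m → K) :
    (p ⬝ᵥ fun i => ∑ k, v k * A k i) = ∑ k, v k * (p ⬝ᵥ A k) := by
  simp only [mul_comm (v _), dot_sum]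

/-- The expansion of `D_{x^c} F^{a,b} - D_{x^b} F^{a,c}` in powers of `p`: all terms of degree
four and five, and many of lower degree, are symmetric in `(b, c)` and cancel. -/
lemma tot_sub_tot [CharZero K] (D : CubicCoeff K m) (Dx : Fin m → CubicCoeff K m)
    (Dy : CubicCoeff K m) (hG : ∀ a b, D.G a b = D.G b a) (hH : ∀ a b, D.H a b = D.H b a)
    (p : Fin m → K) (a b c : Fin m) :
    tot D Dx Dy p a b c - tot D Dx Dy p a c b =
      c0 D Dx a b c + (p ⬝ᵥ c1 D Dx Dy a b c)
        + (p ⬝ᵥ fun i => p ⬝ᵥ c2 D Dx Dy a b c i)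
        + (p ⬝ᵥ fun i => p ⬝ᵥ fun j => p ⬝ᵥ c3 D Dx Dy a b c i j) := by
  have e1 : c1 D Dx Dy a b c = fun i => c1 D Dx Dy a b c i := rfl
  have e2 : (fun i => p ⬝ᵥ c2 D Dx Dy a b c i) = fun i => p ⬝ᵥ fun j => c2 D Dx Dy a b c i j := rfl
  have e3 : (fun i => p ⬝ᵥ fun j => p ⬝ᵥ c3 D Dx Dy a b c i j) =
    fun i => p ⬝ᵥ fun j => p ⬝ᵥ fun q => c3 D Dx Dy a b c i j q := rfl
  rw [e1, e2, e3]
  simp only [c0, c1, c2, c3, dot_fun_add, dot_fun_sub, dot_const_mul, dot_mul_const, dot_sum,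
    dot_sum', dot_kd, Finset.sum_sub_distrib]
  simp only [tot, sum_ev_mul_evp]
  simp only [sum_ev_mul D hG hH]
  simp only [ev, hG c a, hG b a, hG c b, hH c a, hH b a, hH c b, mul_comm (D.H a _ _)]
  ring

lemma dot_swap (u v : Fin m → K) (A : Fin m → Fin m → K) :
    (u ⬝ᵥ fun i => v ⬝ᵥ A i) = v ⬝ᵥ fun j => u ⬝ᵥ fun i => A i j := by
  simp only [dotProduct, Finset.mul_sum]
  rw [Finset.sum_comm]
  simp only [mul_left_comm]

/-! ### Vanishing of polynomials of degree three -/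

/-- A polynomial function of degree at most three vanishes identically iff the symmetrizations of
its coefficients vanish. -/
lemma cubic_eq_zero_iff [CharZero K] (r0 : K) (r1 : Fin m → K) (r2 : Fin m → Fin m → K)
    (r3 : Fin m → Fin m → Fin m → K) :
    (∀ p : Fin m → K, r0 + p ⬝ᵥ r1 + (p ⬝ᵥ fun i => p ⬝ᵥ r2 i)
        + (p ⬝ᵥ fun i => p ⬝ᵥ fun j => p ⬝ᵥ r3 i j) = 0) ↔
      r0 = 0 ∧ (∀ i, r1 i = 0) ∧ (∀ i j, r2 i j + r2 j i = 0) ∧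
        ∀ i j k, r3 i j k + r3 i k j + r3 j i k + r3 j k i + r3 k i j + r3 k j i = 0 := by
  constructor
  · intro h
    have hs : ∀ (p : Fin m → K) (t : K), r0 + t * (p ⬝ᵥ r1)
        + t ^ 2 * (p ⬝ᵥ fun i => p ⬝ᵥ r2 i)
        + t ^ 3 * (p ⬝ᵥ fun i => p ⬝ᵥ fun j => p ⬝ᵥ r3 i j) = 0 := by
      intro p t
      rw [← h (t • p)]
      simp only [smul_dotProduct, dot_const_mul, smul_eq_mul]
      ring
    -- The homogeneous components are recovered from the values at `0`, `p`, `-p` and `2 p`.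
    have q0 : r0 = 0 := by linear_combination hs 0 0
    have q1 : ∀ p : Fin m → K, p ⬝ᵥ r1 = 0 := fun p => by
      linear_combination hs p 1 - (1/3) * hs p (-1) - (1/6) * hs p 2 - (1/2) * q0
    have q2 : ∀ p : Fin m → K, (p ⬝ᵥ fun i => p ⬝ᵥ r2 i) = 0 := fun p => by
      linear_combination (1/2) * hs p 1 + (1/2) * hs p (-1) - q0
    have q3 : ∀ p : Fin m → K, (p ⬝ᵥ fun i => p ⬝ᵥ fun j => p ⬝ᵥ r3 i j) = 0 := fun p => by
      linear_combination hs p 1 - q0 - q1 p - q2 p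
    -- Polarization of the quadratic and of the cubic form.
    have pol2 : ∀ u v : Fin m → K, (u ⬝ᵥ fun i => v ⬝ᵥ r2 i) + (v ⬝ᵥ fun i => u ⬝ᵥ r2 i) = 0 := by
      intro u v
      have := q2 (u + v)
      simp only [add_dotProduct, dot_fun_add] at this
      linear_combination this - q2 u - q2 v
    have pol3 : ∀ u v w : Fin m → K,
        (u ⬝ᵥ fun i => v ⬝ᵥ fun j => w ⬝ᵥ r3 i j) + (u ⬝ᵥ fun i => w ⬝ᵥ fun j => v ⬝ᵥ r3 i j)
        + (v ⬝ᵥ fun i => u ⬝ᵥ fun j => w ⬝ᵥ r3 i j) + (v ⬝ᵥ fun i => w ⬝ᵥ fun j => u ⬝ᵥ r3 i j)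
        + (w ⬝ᵥ fun i => u ⬝ᵥ fun j => v ⬝ᵥ r3 i j) + (w ⬝ᵥ fun i => v ⬝ᵥ fun j => u ⬝ᵥ r3 i j)
        = 0 := by
      intro u v w
      have h3 := q3 (u + v + w)
      have huv := q3 (u + v)
      have huw := q3 (u + w)
      have hvw := q3 (v + w)
      simp only [add_dotProduct, dot_fun_add] at h3 huv huw hvw
      linear_combination h3 - huv - huw - hvw + q3 u + q3 v + q3 w
    refine ⟨q0, fun i => ?_, fun i j => ?_, fun i j k => ?_⟩
    · simpa using q1 (Pi.single i 1)
    · simpa using pol2 (Pi.single i 1) (Pi.single j 1)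
    · simpa using pol3 (Pi.single i 1) (Pi.single j 1) (Pi.single k 1)
  · rintro ⟨h0, h1, h2, h3⟩ p
    have q1 : p ⬝ᵥ r1 = 0 := by simp [dotProduct, h1]
    have q2 : (p ⬝ᵥ fun i => p ⬝ᵥ r2 i) = 0 := by
      have : (p ⬝ᵥ fun i => p ⬝ᵥ fun j => r2 i j + r2 j i) = 0 := by simp [dotProduct, h2]
      simp only [dot_fun_add] at this
      rw [← dot_swap p p r2] at this
      linear_combination (1/2) * this
    have q3 : (p ⬝ᵥ fun i => p ⬝ᵥ fun j => p ⬝ᵥ r3 i j) = 0 := by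
      have : (p ⬝ᵥ fun i => p ⬝ᵥ fun j => p ⬝ᵥ fun k => r3 i j k + r3 i k j + r3 j i k + r3 j k i
          + r3 k i j + r3 k j i) = 0 := by simp [dotProduct, h3]
      simp only [dot_fun_add] at this
      have e1 : (p ⬝ᵥ fun i => p ⬝ᵥ fun j => p ⬝ᵥ fun k => r3 i k j)
          = p ⬝ᵥ fun i => p ⬝ᵥ fun j => p ⬝ᵥ r3 i j := by
        congr 1; funext i; exact (dot_swap p p (r3 i)).symm
      have e2 : (p ⬝ᵥ fun i => p ⬝ᵥ fun j => p ⬝ᵥ fun k => r3 j i k)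
          = p ⬝ᵥ fun i => p ⬝ᵥ fun j => p ⬝ᵥ r3 i j :=
        (dot_swap p p fun i j => p ⬝ᵥ r3 i j).symm
      have e3 : (p ⬝ᵥ fun i => p ⬝ᵥ fun j => p ⬝ᵥ fun k => r3 k i j)
          = p ⬝ᵥ fun i => p ⬝ᵥ fun j => p ⬝ᵥ fun k => r3 j i k := by
        congr 1; funext i; exact (dot_swap p p fun j k => r3 j i k).symm
      have e4 : (p ⬝ᵥ fun i => p ⬝ᵥ fun j => p ⬝ᵥ fun k => r3 j k i)
          = p ⬝ᵥ fun i => p ⬝ᵥ fun j => p ⬝ᵥ fun k => r3 i k j :=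
        (dot_swap p p fun i j => p ⬝ᵥ fun k => r3 i k j).symm
      have e5 : (p ⬝ᵥ fun i => p ⬝ᵥ fun j => p ⬝ᵥ fun k => r3 k j i)
          = p ⬝ᵥ fun i => p ⬝ᵥ fun j => p ⬝ᵥ fun k => r3 j k i := by
        congr 1; funext i; exact (dot_swap p p fun j k => r3 j k i).symm
      rw [e5, e4, e3, e2, e1] at this
      linear_combination (1/6) * this
    rw [h0, q1, q2, q3]
    simp

end CubicCoeff

lemma sum_perm_two {A : Type} [AddCommMonoid A] (f : Equiv.Perm (Fin 2) → A) :
    ∑ σ, f σ = f 1 + f (Equiv.swap 0 1) := by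
  rw [show (Finset.univ : Finset (Equiv.Perm (Fin 2))) = {1, Equiv.swap 0 1} by decide,
    Finset.sum_pair (by decide)]

lemma sum_perm_three {A : Type} [AddCommMonoid A] (f : Fin 3 → Fin 3 → Fin 3 → A) :
    ∑ σ : Equiv.Perm (Fin 3), f (σ 0) (σ 1) (σ 2)
      = f 0 1 2 + f 0 2 1 + f 1 0 2 + f 1 2 0 + f 2 0 1 + f 2 1 0 := by
  rw [show (Finset.univ : Finset (Equiv.Perm (Fin 3))) = {1, Equiv.swap 1 2, Equiv.swap 0 1,
    Equiv.swap 0 1 * Equiv.swap 1 2, Equiv.swap 1 2 * Equiv.swap 0 1, Equiv.swap 0 2} by decide]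
  repeat rw [Finset.sum_insert (by decide)]
  rw [Finset.sum_singleton]
  simp only [add_assoc]
  rfl

/-! ### Derivatives of the cubic right-hand sides -/

section Jets

variable {F : Type} [RCLike F] {m : ℕ}

/-- The values at `w` of the coefficients of a cubic system. -/
def coeffAt (G : Fin m → Fin m → Pt F m → F) (H : Fin m → Fin m → Fin m → Pt F m → F)
    (L : Fin m → Fin m → Pt F m → F) (M : Fin m → Pt F m → F) (w : Pt F m) : CubicCoeff F m :=
  ⟨fun a b => G a b w, fun a b k => H a b k w, fun a k => L a k w, fun k => M k w⟩

/-- The `x^c`-derivatives at `w` of the coefficients of a cubic system. -/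
def coeffDx (G : Fin m → Fin m → Pt F m → F) (H : Fin m → Fin m → Fin m → Pt F m → F)
    (L : Fin m → Fin m → Pt F m → F) (M : Fin m → Pt F m → F) (w : Pt F m) (c : Fin m) :
    CubicCoeff F m :=
  ⟨fun a b => px (G a b) c w, fun a b k => px (H a b k) c w, fun a k => px (L a k) c w,
    fun k => px (M k) c w⟩

/-- The `y`-derivatives at `w` of the coefficients of a cubic system. -/
def coeffDy (G : Fin m → Fin m → Pt F m → F) (H : Fin m → Fin m → Fin m → Pt F m → F)
    (L : Fin m → Fin m → Pt F m → F) (M : Fin m → Pt F m → F) (w : Pt F m) : CubicCoeff F m :=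
  ⟨fun a b => py (G a b) w, fun a b k => py (H a b k) w, fun a k => py (L a k) w,
    fun k => py (M k) w⟩

lemma hasFDerivAt_base {f : Pt F m → F} {z : Jet F m} (hf : DifferentiableAt F f (z.1, z.2.1)) :
    HasFDerivAt (fun z : Jet F m => f (z.1, z.2.1))
      ((fderiv F f (z.1, z.2.1)).comp ((ContinuousLinearMap.fst F _ _).prod
        ((ContinuousLinearMap.fst F _ _).comp (ContinuousLinearMap.snd F _ _)))) z := by
  have h1 : HasFDerivAt (fun z : Jet F m => ((z.1, z.2.1) : Pt F m))
      ((ContinuousLinearMap.fst F _ _).prod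
        ((ContinuousLinearMap.fst F _ _).comp (ContinuousLinearMap.snd F _ _))) z :=
    hasFDerivAt_fst.prodMk (hasFDerivAt_fst.comp z hasFDerivAt_snd)
  exact HasFDerivAt.comp z hf.hasFDerivAt h1

lemma hasFDerivAt_p (k : Fin m) (z : Jet F m) :
    HasFDerivAt (fun z : Jet F m => z.2.2 k)
      ((ContinuousLinearMap.proj (R := F) (φ := fun _ : Fin m => F) k).comp
        ((ContinuousLinearMap.snd F _ _).comp (ContinuousLinearMap.snd F _ _))) z := by
  have h : HasFDerivAt (fun z : Jet F m => z.2.2)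
      ((ContinuousLinearMap.snd F _ _).comp (ContinuousLinearMap.snd F _ _)) z :=
    hasFDerivAt_snd.comp z hasFDerivAt_snd
  exact hasFDerivAt_pi'.1 h k

variable {G : Fin m → Fin m → Pt F m → F} {H : Fin m → Fin m → Fin m → Pt F m → F}
  {L : Fin m → Fin m → Pt F m → F} {M : Fin m → Pt F m → F} {z : Jet F m}

/-- The product rule for `F^{a,b}`, in an arbitrary direction `v`. -/
lemma fderiv_cubicF (hG : ∀ a b, DifferentiableAt F (G a b) (z.1, z.2.1))
    (hH : ∀ a b k, DifferentiableAt F (H a b k) (z.1, z.2.1))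
    (hL : ∀ a k, DifferentiableAt F (L a k) (z.1, z.2.1))
    (hM : ∀ k, DifferentiableAt F (M k) (z.1, z.2.1)) (a b : Fin m) (v : Jet F m) :
    fderiv F (cubicF G H L M a b) z v = fderiv F (G a b) (z.1, z.2.1) (v.1, v.2.1)
      + ∑ k, (z.2.2 k * (fderiv F (H a b k) (z.1, z.2.1) (v.1, v.2.1)
          + (1/2) * z.2.2 a * fderiv F (L b k) (z.1, z.2.1) (v.1, v.2.1)
          + (1/2) * v.2.2 a * L b k (z.1, z.2.1)
          + (1/2) * z.2.2 b * fderiv F (L a k) (z.1, z.2.1) (v.1, v.2.1)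
          + (1/2) * v.2.2 b * L a k (z.1, z.2.1)
          + z.2.2 a * z.2.2 b * fderiv F (M k) (z.1, z.2.1) (v.1, v.2.1)
          + z.2.2 a * v.2.2 b * M k (z.1, z.2.1) + v.2.2 a * z.2.2 b * M k (z.1, z.2.1))
        + v.2.2 k * (H a b k (z.1, z.2.1) + (1/2) * z.2.2 a * L b k (z.1, z.2.1)
          + (1/2) * z.2.2 b * L a k (z.1, z.2.1) + z.2.2 a * z.2.2 b * M k (z.1, z.2.1))) := by
  have h := (hasFDerivAt_base (hG a b)).fun_add (HasFDerivAt.fun_sum (u := Finset.univ) fun k _ =>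
    (hasFDerivAt_p k z).fun_mul ((((hasFDerivAt_base (hH a b k)).fun_add
      (((hasFDerivAt_p a z).const_mul (1/2 : F)).fun_mul (hasFDerivAt_base (hL b k)))).fun_add
      (((hasFDerivAt_p b z).const_mul (1/2 : F)).fun_mul (hasFDerivAt_base (hL a k)))).fun_add
      (((hasFDerivAt_p a z).fun_mul (hasFDerivAt_p b z)).fun_mul (hasFDerivAt_base (hM k)))))
  have h' : fderiv F (cubicF G H L M a b) z = _ := h.fderiv
  rw [h']
  simp only [_root_.add_apply, _root_.sum_apply,
    _root_.smul_apply, ContinuousLinearMap.comp_apply, ContinuousLinearMap.prod_apply,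
    ContinuousLinearMap.coe_fst', ContinuousLinearMap.coe_snd', ContinuousLinearMap.proj_apply,
    smul_eq_mul]
  congr 1
  refine Finset.sum_congr rfl fun k _ => ?_
  ring

lemma cubicF_eq (a b : Fin m) :
    cubicF G H L M a b z = (coeffAt G H L M (z.1, z.2.1)).ev z.2.2 a b := by
  simp only [cubicF, CubicCoeff.ev, coeffAt, dotProduct, add_assoc, Finset.mul_sum,
    ← Finset.sum_add_distrib]
  congr 1
  refine Finset.sum_congr rfl fun k _ => ?_
  ring

/-- The total derivative of `F^{a,b}` at a jet depends only on `p` and on the first-order Taylor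
data of the coefficients at the base point. -/
lemma Dtot_cubicF (hG : ∀ a b, DifferentiableAt F (G a b) (z.1, z.2.1))
    (hH : ∀ a b k, DifferentiableAt F (H a b k) (z.1, z.2.1))
    (hL : ∀ a k, DifferentiableAt F (L a k) (z.1, z.2.1))
    (hM : ∀ k, DifferentiableAt F (M k) (z.1, z.2.1)) (a b c : Fin m) :
    Dtot (cubicF G H L M) c (cubicF G H L M a b) z =
      (coeffAt G H L M (z.1, z.2.1)).tot (coeffDx G H L M (z.1, z.2.1))
        (coeffDy G H L M (z.1, z.2.1)) z.2.2 a b c := by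
  have ex : jx (cubicF G H L M a b) c z = (coeffDx G H L M (z.1, z.2.1) c).ev z.2.2 a b := by
    simp only [jx, fderiv_cubicF hG hH hL hM, CubicCoeff.ev, coeffDx, dotProduct, px, add_assoc,
      Finset.mul_sum, ← Finset.sum_add_distrib, Pi.zero_apply]
    congr 1
    refine Finset.sum_congr rfl fun k _ => ?_
    ring
  have ey : jy (cubicF G H L M a b) z = (coeffDy G H L M (z.1, z.2.1)).ev z.2.2 a b := by
    simp only [jy, fderiv_cubicF hG hH hL hM, CubicCoeff.ev, coeffDy, dotProduct, py, add_assoc,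
      Finset.mul_sum, ← Finset.sum_add_distrib, Pi.zero_apply]
    congr 1
    refine Finset.sum_congr rfl fun k _ => ?_
    ring
  have ep : ∀ l, jp (cubicF G H L M a b) l z
      = (coeffAt G H L M (z.1, z.2.1)).evp z.2.2 a b l := by
    intro l
    have h0 : ((0 : Fin m → F), (0 : F)) = 0 := rfl
    have hk : ∀ i, (Pi.single l (1 : F) : Fin m → F) i = kd F i l := fun i => by
      rw [Pi.single_apply, kd]
    have hs : ∀ f : Fin m → F, ∑ k, kd F k l * f k = f l := fun f => by simp [kd]
    simp only [jp, fderiv_cubicF hG hH hL hM, h0, map_zero, hk, Finset.sum_add_distrib, hs]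
    simp only [CubicCoeff.evp, coeffAt, dotProduct, zero_add, mul_zero, add_zero]
    have : ∀ k, z.2.2 k * ((1/2) * kd F a l * L b k (z.1, z.2.1)
          + (1/2) * kd F b l * L a k (z.1, z.2.1) + z.2.2 a * kd F b l * M k (z.1, z.2.1)
          + kd F a l * z.2.2 b * M k (z.1, z.2.1))
        = (1/2) * kd F a l * (z.2.2 k * L b k (z.1, z.2.1))
          + (1/2) * kd F b l * (z.2.2 k * L a k (z.1, z.2.1))
          + kd F a l * z.2.2 b * (z.2.2 k * M k (z.1, z.2.1))
          + kd F b l * z.2.2 a * (z.2.2 k * M k (z.1, z.2.1)) := fun k => by ring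
    simp only [this, Finset.sum_add_distrib, ← Finset.mul_sum]
    ring
  simp only [Dtot, ex, ey, ep, cubicF_eq, CubicCoeff.tot]

/-- At a fixed point `(x, y)`, vanishing of the symmetrized coefficients is the conjunction of the
four first-order systems. -/
lemma coeff_eq_zero_iff (w : Pt F m) :
    (∀ a b c, (coeffAt G H L M w).c0 (coeffDx G H L M w) a b c = 0 ∧
      (∀ i, (coeffAt G H L M w).c1 (coeffDx G H L M w) (coeffDy G H L M w) a b c i = 0) ∧
      (∀ i j, (coeffAt G H L M w).c2 (coeffDx G H L M w) (coeffDy G H L M w) a b c i j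
        + (coeffAt G H L M w).c2 (coeffDx G H L M w) (coeffDy G H L M w) a b c j i = 0) ∧
      ∀ i j k, (coeffAt G H L M w).c3 (coeffDx G H L M w) (coeffDy G H L M w) a b c i j k
        + (coeffAt G H L M w).c3 (coeffDx G H L M w) (coeffDy G H L M w) a b c i k j
        + (coeffAt G H L M w).c3 (coeffDx G H L M w) (coeffDy G H L M w) a b c j i k
        + (coeffAt G H L M w).c3 (coeffDx G H L M w) (coeffDy G H L M w) a b c j k i
        + (coeffAt G H L M w).c3 (coeffDx G H L M w) (coeffDy G H L M w) a b c k i j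
        + (coeffAt G H L M w).c3 (coeffDx G H L M w) (coeffDy G H L M w) a b c k j i = 0) ↔
    EqI G H w ∧ EqII G H L w ∧ EqIII G H L M w ∧ EqIV H L M w := by
  have h3 : EqIII G H L M w ↔ ∀ a b c i j,
      (coeffAt G H L M w).c2 (coeffDx G H L M w) (coeffDy G H L M w) a b c i j
        + (coeffAt G H L M w).c2 (coeffDx G H L M w) (coeffDy G H L M w) a b c j i = 0 := by
    have key : ∀ a b c (kk : Fin 2 → Fin m), _ = _ := fun a b c kk =>
      sum_perm_two fun σ => (coeffAt G H L M w).c2 (coeffDx G H L M w) (coeffDy G H L M w) a b c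
        (kk (σ 0)) (kk (σ 1))
    constructor
    · intro h a b c i j
      exact (key a b c ![i, j]).symm.trans (h a b c ![i, j]).symm
    · intro h a b c kk
      exact ((key a b c kk).trans (h a b c (kk 0) (kk 1))).symm
  have h4 : EqIV H L M w ↔ ∀ a b c i j k,
      (coeffAt G H L M w).c3 (coeffDx G H L M w) (coeffDy G H L M w) a b c i j k
        + (coeffAt G H L M w).c3 (coeffDx G H L M w) (coeffDy G H L M w) a b c i k j
        + (coeffAt G H L M w).c3 (coeffDx G H L M w) (coeffDy G H L M w) a b c j i k
        + (coeffAt G H L M w).c3 (coeffDx G H L M w) (coeffDy G H L M w) a b c j k i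
        + (coeffAt G H L M w).c3 (coeffDx G H L M w) (coeffDy G H L M w) a b c k i j
        + (coeffAt G H L M w).c3 (coeffDx G H L M w) (coeffDy G H L M w) a b c k j i = 0 := by
    have key : ∀ a b c (kk : Fin 3 → Fin m), _ = _ := fun a b c kk =>
      sum_perm_three fun r s t =>
        (coeffAt G H L M w).c3 (coeffDx G H L M w) (coeffDy G H L M w) a b c
          (kk r) (kk s) (kk t)
    constructor
    · intro h a b c i j k
      exact (key a b c ![i, j, k]).symm.trans (h a b c ![i, j, k]).symm
    · intro h a b c kk
      exact ((key a b c kk).trans (h a b c (kk 0) (kk 1) (kk 2))).symm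
  rw [h3, h4]
  constructor
  · intro h
    exact ⟨fun a b c => (h a b c).1.symm, fun a b c i => ((h a b c).2.1 i).symm,
      fun a b c => (h a b c).2.2.1, fun a b c => (h a b c).2.2.2⟩
  · rintro ⟨e1, e2, e3, e4⟩ a b c
    exact ⟨(e1 a b c).symm, fun i => (e2 a b c i).symm, e3 a b c, e4 a b c⟩

end Jets

/-- For the cubic system associated with G, H, L, M, the compatibility
conditions `D_{x^{j3}}(F^{j1,j2}) = D_{x^{j2}}(F^{j1,j3})` hold identically in (x, y, p)
if and only if G, H, L, M satisfy the four first-order systems (I′), (II′), (III′), (IV′)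
at every point of the domain. -/
theorem cubic_compatibility_iff_first_order_systems
    {𝕂 : Type} [RCLike 𝕂] {n : ℕ} (hn : 2 ≤ n)
    (W : Set (Pt 𝕂 n)) (hW : IsOpen W) (hW0 : (0 : Pt 𝕂 n) ∈ W)
    (G : Fin n → Fin n → Pt 𝕂 n → 𝕂) (H : Fin n → Fin n → Fin n → Pt 𝕂 n → 𝕂)
    (L : Fin n → Fin n → Pt 𝕂 n → 𝕂) (M : Fin n → Pt 𝕂 n → 𝕂)
    (hG : ∀ j1 j2, AnalyticOnNhd 𝕂 (G j1 j2) W)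
    (hH : ∀ j1 j2 k1, AnalyticOnNhd 𝕂 (H j1 j2 k1) W)
    (hL : ∀ j1 k1, AnalyticOnNhd 𝕂 (L j1 k1) W)
    (hM : ∀ k1, AnalyticOnNhd 𝕂 (M k1) W)
    (hGsym : ∀ j1 j2, G j1 j2 = G j2 j1)
    (hHsym : ∀ j1 j2 k1, H j1 j2 k1 = H j2 j1 k1) :
    (∀ j1 j2 j3 : Fin n, ∀ z : Jet 𝕂 n, (z.1, z.2.1) ∈ W →
        Dtot (cubicF G H L M) j3 (cubicF G H L M j1 j2) z
          = Dtot (cubicF G H L M) j2 (cubicF G H L M j1 j3) z) ↔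
      (∀ z ∈ W, EqI G H z ∧ EqII G H L z ∧ EqIII G H L M z ∧ EqIV H L M z) := by
  have key : ∀ w ∈ W, (∀ p : Fin n → 𝕂, ∀ j1 j2 j3 : Fin n,
      Dtot (cubicF G H L M) j3 (cubicF G H L M j1 j2) (w.1, w.2, p)
        = Dtot (cubicF G H L M) j2 (cubicF G H L M j1 j3) (w.1, w.2, p)) ↔
      EqI G H w ∧ EqII G H L w ∧ EqIII G H L M w ∧ EqIV H L M w := by
    intro w hw
    have dG : ∀ a b, DifferentiableAt 𝕂 (G a b) w := fun a b => (hG a b w hw).differentiableAt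
    have dH : ∀ a b k, DifferentiableAt 𝕂 (H a b k) w :=
      fun a b k => (hH a b k w hw).differentiableAt
    have dL : ∀ a k, DifferentiableAt 𝕂 (L a k) w := fun a k => (hL a k w hw).differentiableAt
    have dM : ∀ k, DifferentiableAt 𝕂 (M k) w := fun k => (hM k w hw).differentiableAt
    have sG : ∀ a b, (coeffAt G H L M w).G a b = (coeffAt G H L M w).G b a :=
      fun a b => congrFun (hGsym a b) w
    have sH : ∀ a b, (coeffAt G H L M w).H a b = (coeffAt G H L M w).H b a :=
      fun a b => funext fun k => congrFun (hHsym a b k) w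
    rw [← coeff_eq_zero_iff]
    simp only [← CubicCoeff.cubic_eq_zero_iff, ← CubicCoeff.tot_sub_tot _ _ _ sG sH, sub_eq_zero]
    have hD := fun (p : Fin n → 𝕂) a b c => Dtot_cubicF (z := (w.1, w.2, p)) dG dH dL dM a b c
    simp only [hD]
    exact ⟨fun h a b c p => h p a b c, fun h p a b c => h a b c p⟩
  constructor
  · intro h w hw
    exact (key w hw).1 fun p a b c => h a b c (w.1, w.2, p) hw
  · intro h a b c z hz
    exact (key _ hz).2 (h _ hz) z.2.2 a b c
end
end

section
/- Let 𝕂 = ℝ or ℂ and n = 2. Let X^1, X^2, Y be 𝕂-analytic near the origin of 𝕂^2 × 𝕂 and consider a second-order jet point (x^1, x^2, y, p_1, p_2, q_{1,1}, q_{1,2}, q_{2,2}) at which DX is invertible and Δ(x^1|x^2|y) ≠ 0. Then Y_{X^jX^k} = 0 for all j, k ∈ {1,2} holds if and only if the following three equations hold: (E1) 0 = q_{1,1}·Δ(x^1|x^2|y) + Δ(x^1|x^2|x^1x^1) + p_1·(2Δ(x^1|x^2|x^1y) − Δ(x^1x^1|x^2|y)) + p_2·(−Δ(x^1|x^1x^1|y))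 + p_1 p_1·(Δ(x^1|x^2|yy) − 2Δ(x^1y|x^2|y)) + p_1 p_2·(−2Δ(x^1|x^1y|y)) + p_1 p_1 p_1·(−Δ(yy|x^2|y)) + p_1 p_1 p_2·(−Δ(x^1|yy|y)); (E2) 0 = q_{1,2}·Δ(x^1|x^2|y) + Δ(x^1|x^2|x^1x^2) + p_1·(Δ(x^1|x^2|x^2y) − Δ(x^1x^2|x^2|y)) + p_2·(Δ(x^1|x^2|x^1y) − Δ(x^1|x^1x^2|y)) + p_1 p_1·(−Δ(x^2y|x^2|y)) + p_1 p_2·(Δ(x^1|x^2|yy) − Δ(x^1y|x^2|y) − Δ(x^1|x^2y|y)) + p_2 p_2·(−Δ(x^1|x^1y|y)) + p_1 p_1 p_2·(−Δ(yy|x^2|y)) + p_1 p_2 p_2·(−Δ(x^1|yy|y)); (E3) 0 = q_{2,2}·Δ(x^1|x^2|y) + Δ(x^1|x^2|x^2x^2) + p_1·(−Δ(x^2x^2|x^2|y)) + p_2·(2Δ(x^1|x^2|x^2y) − Δ(x^1|x^2x^2|y)) + p_1 p_2·(−2Δ(x^2y|x^2|y)) + p_2 p_2·(Δ(x^1|x^2|yy)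 − 2Δ(x^1|x^2y|y)) + p_1 p_2 p_2·(−Δ(yy|x^2|y)) + p_2 p_2 p_2·(−Δ(x^1|yy|y)). -/
/-!
Near the given jet point the matrix `DX` is invertible, so `DX · Y_X = DY` there, that is
`D_i Y = Σ_j (D_i X^j) Y_{X^j}`. Applying `D_k` gives
`D_k D_i Y = Σ_j (D_k D_i X^j) Y_{X^j} + Σ_j (D_i X^j) (D_k Y_{X^j})`.
Since `DX` is invertible, all `Y_{X^j X^k}` vanish iff all `D_k Y_{X^j}` vanish, iff
`D_k D_i Y = Σ_j (D_k D_i X^j) Y_{X^j}` for all `i`, `k`. By Cramer's rule for `Y_X`, this last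
equation says that the `3 × 3` determinant with columns `D_1`, `D_2`, `D_k D_i` applied to
`(X^1, X^2, Y)` vanishes. Moreover
`D_k D_i f = f_{x^i x^k} + p_k f_{x^i y} + p_i f_{x^k y} + p_i p_k f_{yy} + q_{k,i} f_y`,
which is symmetric in `i` and `k`; so three equations remain, and expanding the determinants
by multilinearity gives (E1), (E2), (E3). The lemmas carrying this are `Dk_totalD`
(second total derivatives), `Dk_YX_relation` (the differentiated linear system) and
`cramer_iff` (the passage to determinants).
-/

noncomputable section
open scoped BigOperators

/-- First-order jet points (x, y, p). -/
abbrev JetP (𝕂 : Type) (n : ℕ) := (Fin n → 𝕂) × 𝕂 × (Fin n → 𝕂)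

/-- Second-order jet points (x, y, p, q). -/
abbrev Jet2 (𝕂 : Type) (n : ℕ) := JetP 𝕂 n × (Fin n → Fin n → 𝕂)

variable {𝕂 : Type} [RCLike 𝕂] {n : ℕ}

/-- The k-th total differentiation operator `D_k f = f_{x^k} + p_k f_y + Σ_l q_{k,l} f_{p_l}`
acting on a function `f` of (x, y, p), evaluated at a second-order jet point (x, y, p, q). -/
def Dk (f : JetP 𝕂 n → 𝕂) (k : Fin n) (w : Jet2 𝕂 n) : 𝕂 :=
  fderiv 𝕂 f w.1 (Pi.single k 1, 0, 0) + w.1.2.2 k * fderiv 𝕂 f w.1 (0, 1, 0)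
    + ∑ l, w.2 k l * fderiv 𝕂 f w.1 (0, 0, Pi.single l 1)

/-- The matrix DX with entries (DX)_{i,j} = D_i Xʲ = Xʲ_{x^i} + p_i Xʲ_y,
as a function of (x, y, p). -/
def DXmat (Xf : Fin n → Pt 𝕂 n → 𝕂) (z : JetP 𝕂 n) : Matrix (Fin n) (Fin n) 𝕂 :=
  Matrix.of fun i j => px (Xf j) i (z.1, z.2.1) + z.2.2 i * py (Xf j) (z.1, z.2.1)

/-- The column vector DY with entries D_i Y, as a function of (x, y, p). -/
def DYvec (Yf : Pt 𝕂 n → 𝕂) (z : JetP 𝕂 n) : Fin n → 𝕂 :=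
  fun i => px Yf i (z.1, z.2.1) + z.2.2 i * py Yf (z.1, z.2.1)

/-- The first-order derivatives Y_X := (DX)⁻¹ · DY, as functions of (x, y, p). -/
def YX (Xf : Fin n → Pt 𝕂 n → 𝕂) (Yf : Pt 𝕂 n → 𝕂) (z : JetP 𝕂 n) : Fin n → 𝕂 :=
  (DXmat Xf z)⁻¹.mulVec (DYvec Yf z)

/-- The second-order derivatives (Y_{XʲX¹}, …, Y_{XʲXⁿ}) := (DX)⁻¹ · (D_1 Y_{Xʲ}, …, D_n Y_{Xʲ}),
as functions of the second-order jet point. -/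
def YXX (Xf : Fin n → Pt 𝕂 n → 𝕂) (Yf : Pt 𝕂 n → 𝕂) (j : Fin n) (w : Jet2 𝕂 n) :
    Fin n → 𝕂 :=
  (DXmat Xf w.1)⁻¹.mulVec (fun i => Dk (fun z => YX Xf Yf z j) i w)

variable {𝕂 : Type} [RCLike 𝕂]

/-- Column operator: first-order derivative ∂/∂x¹. -/
def c1 (f : Pt 𝕂 2 → 𝕂) : Pt 𝕂 2 → 𝕂 := px f 0
/-- ∂/∂x². -/
def c2 (f : Pt 𝕂 2 → 𝕂) : Pt 𝕂 2 → 𝕂 := px f 1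
/-- ∂/∂y. -/
def cy (f : Pt 𝕂 2 → 𝕂) : Pt 𝕂 2 → 𝕂 := py f
/-- ∂²/∂x¹∂x¹. -/
def c11 (f : Pt 𝕂 2 → 𝕂) : Pt 𝕂 2 → 𝕂 := px (px f 0) 0
/-- ∂²/∂x¹∂x². -/
def c12 (f : Pt 𝕂 2 → 𝕂) : Pt 𝕂 2 → 𝕂 := px (px f 0) 1
/-- ∂²/∂x¹∂y. -/
def c1y (f : Pt 𝕂 2 → 𝕂) : Pt 𝕂 2 → 𝕂 := py (px f 0)
/-- ∂²/∂x²∂x². -/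
def c22 (f : Pt 𝕂 2 → 𝕂) : Pt 𝕂 2 → 𝕂 := px (px f 1) 1
/-- ∂²/∂x²∂y. -/
def c2y (f : Pt 𝕂 2 → 𝕂) : Pt 𝕂 2 → 𝕂 := py (px f 1)
/-- ∂²/∂y∂y. -/
def cyy (f : Pt 𝕂 2 → 𝕂) : Pt 𝕂 2 → 𝕂 := py (py f)

/-- The (possibly modified) Jacobian determinant Δ(a|b|c): rows X¹, X², Y, columns given
by the differential operators a, b, c. -/
def Det3 (X1 X2 Yf : Pt 𝕂 2 → 𝕂) (a b c : (Pt 𝕂 2 → 𝕂) → Pt 𝕂 2 → 𝕂) (z : Pt 𝕂 2) : 𝕂 :=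
  Matrix.det !![a X1 z, b X1 z, c X1 z;
                a X2 z, b X2 z, c X2 z;
                a Yf z, b Yf z, c Yf z]

/-- The first total derivative `D_i f = f_{x^i} + p_i f_y` of a function of (x, y), as a
function of (x, y, p). The entries of `DXmat` and `DYvec` are of this form. -/
def totalD (f : Pt 𝕂 n → 𝕂) (i : Fin n) (z : JetP 𝕂 n) : 𝕂 :=
  px f i (z.1, z.2.1) + z.2.2 i * py f (z.1, z.2.1)

/-- The direction in the space of first-order jets along which `D_k` differentiates. -/
def dirD (k : Fin n) (w : Jet2 𝕂 n) : JetP 𝕂 n := (Pi.single k 1, w.1.2.2 k, w.2 k)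

/-- `D_k` is a directional derivative; no differentiability of `f` is needed, since both sides
are built from the same continuous linear map `fderiv 𝕂 f w.1`. -/
lemma Dk_eq_fderiv (f : JetP 𝕂 n → 𝕂) (k : Fin n) (w : Jet2 𝕂 n) :
    Dk f k w = fderiv 𝕂 f w.1 (dirD k w) := by
  have h : dirD k w = (Pi.single k 1, 0, 0) + w.1.2.2 k • ((0, 1, 0) : JetP 𝕂 n)
      + ∑ l, w.2 k l • ((0, 0, Pi.single l 1) : JetP 𝕂 n) := by
    refine Prod.ext ?_ (Prod.ext ?_ ?_)
    · simp [dirD, Prod.fst_sum]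
    · simp [dirD, Prod.fst_sum, Prod.snd_sum]
    · simp only [dirD, Prod.snd_add, Prod.snd_sum, Prod.smul_snd, smul_zero, add_zero, zero_add]
      ext l
      simp [Finset.sum_apply, Pi.single_apply]
  rw [h, map_add, map_add, map_sum]
  simp only [map_smul, smul_eq_mul, Dk]

lemma differentiableAt_fderiv_apply {f : Pt 𝕂 n → 𝕂} {a : Pt 𝕂 n} (hf : AnalyticAt 𝕂 f a)
    (u : Pt 𝕂 n) : DifferentiableAt 𝕂 (fun z => fderiv 𝕂 f z u) a :=
  hf.fderiv.differentiableAt.clm_apply (differentiableAt_const u)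

/-- Symmetry of second derivatives, for iterated directional derivatives. -/
lemma fderiv_fderiv_comm {f : Pt 𝕂 n → 𝕂} {a : Pt 𝕂 n} (hf : AnalyticAt 𝕂 f a)
    (u v : Pt 𝕂 n) :
    fderiv 𝕂 (fun z => fderiv 𝕂 f z u) a v = fderiv 𝕂 (fun z => fderiv 𝕂 f z v) a u := by
  have h (u v : Pt 𝕂 n) :
      fderiv 𝕂 (fun z => fderiv 𝕂 f z u) a v = fderiv 𝕂 (fderiv 𝕂 f) a v u := by
    rw [fderiv_clm_apply hf.fderiv.differentiableAt (differentiableAt_const u)]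
    simp
  rw [h, h]
  exact (hf.contDiffAt (n := ⊤)).isSymmSndFDerivAt le_top v u

lemma differentiableAt_totalD {f : Pt 𝕂 n → 𝕂} {z : JetP 𝕂 n}
    (hf : AnalyticAt 𝕂 f (z.1, z.2.1)) (i : Fin n) : DifferentiableAt 𝕂 (totalD f i) z := by
  have h (u : Pt 𝕂 n) :
      DifferentiableAt 𝕂 (fun z : JetP 𝕂 n => fderiv 𝕂 f (z.1, z.2.1) u) z :=
    (differentiableAt_fderiv_apply hf u).comp z (f := fun z : JetP 𝕂 n => (z.1, z.2.1))
      (by fun_prop)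
  unfold totalD px py
  have h1 := h (Pi.single i 1, 0)
  have h2 := h (0, 1)
  fun_prop

/-- The second total derivative `D_k D_i f` of a function of (x, y). -/
lemma Dk_totalD {f : Pt 𝕂 n → 𝕂} {w : Jet2 𝕂 n}
    (hf : AnalyticAt 𝕂 f (w.1.1, w.1.2.1)) (i k : Fin n) :
    Dk (totalD f i) k w =
      px (px f i) k (w.1.1, w.1.2.1) + w.1.2.2 k * py (px f i) (w.1.1, w.1.2.1)
        + w.1.2.2 i * (py (px f k) (w.1.1, w.1.2.1) + w.1.2.2 k * py (py f) (w.1.1, w.1.2.1))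
        + w.2 k i * py f (w.1.1, w.1.2.1) := by
  set a : Pt 𝕂 n := (w.1.1, w.1.2.1) with ha
  -- The projection `(x, y, p) ↦ (x, y)`, through which the partial derivatives of `f` factor.
  let π : JetP 𝕂 n →L[𝕂] Pt 𝕂 n :=
    (ContinuousLinearMap.fst 𝕂 _ _).prod
      ((ContinuousLinearMap.fst 𝕂 _ _).comp (ContinuousLinearMap.snd 𝕂 _ _))
  have hg (u : Pt 𝕂 n) : HasFDerivAt (fun z : JetP 𝕂 n => fderiv 𝕂 f (z.1, z.2.1) u)
      ((fderiv 𝕂 (fun z => fderiv 𝕂 f z u) a).comp π) w.1 :=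
    HasFDerivAt.comp w.1 (f := π) (differentiableAt_fderiv_apply hf u).hasFDerivAt π.hasFDerivAt
  let ρ : JetP 𝕂 n →L[𝕂] 𝕂 :=
    (ContinuousLinearMap.proj i).comp
      ((ContinuousLinearMap.snd 𝕂 _ _).comp (ContinuousLinearMap.snd 𝕂 _ _))
  have hp : HasFDerivAt (fun z : JetP 𝕂 n => z.2.2 i) ρ w.1 := ρ.hasFDerivAt
  have key : HasFDerivAt (totalD f i) _ w.1 := (hg (Pi.single i 1, 0)).add (hp.mul (hg (0, 1)))
  have hπ : π (dirD k w) = (Pi.single k 1, 0) + w.1.2.2 k • ((0, 1) : Pt 𝕂 n) := by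
    simp [π, dirD]
  have hρ : ρ (dirD k w) = w.2 k i := rfl
  rw [Dk_eq_fderiv, key.fderiv]
  simp only [add_apply, smul_apply,
    ContinuousLinearMap.comp_apply, hπ, hρ, map_add, map_smul, smul_eq_mul]
  rw [fderiv_fderiv_comm hf (0, 1) (Pi.single k 1, 0)]
  unfold px py
  ring

/-- Cramer's rule for `Y_X`, which makes `Y_X` visibly differentiable where `DX` is invertible.
It holds everywhere, with both sides zero where `DX` is singular. -/
lemma YX_formula (X1 X2 Yf : Pt 𝕂 2 → 𝕂) (z : JetP 𝕂 2) :
    YX ![X1, X2] Yf z 0 = (DXmat ![X1, X2] z).det⁻¹ *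
        (totalD X2 1 z * totalD Yf 0 z - totalD X2 0 z * totalD Yf 1 z) ∧
    YX ![X1, X2] Yf z 1 = (DXmat ![X1, X2] z).det⁻¹ *
        (totalD X1 0 z * totalD Yf 1 z - totalD X1 1 z * totalD Yf 0 z) := by
  constructor <;>
  · simp only [YX, Matrix.inv_def, Ring.inverse_eq_inv', Matrix.adjugate_fin_two, DXmat, DYvec,
      Matrix.mulVec, dotProduct, Fin.sum_univ_two, totalD, Matrix.smul_apply, Matrix.of_apply,
      Matrix.cons_val_zero, Matrix.cons_val_one, Matrix.cons_val', smul_eq_mul,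
      Matrix.cons_val_fin_one]
    ring

lemma DXmat_det (X1 X2 : Pt 𝕂 2 → 𝕂) (z : JetP 𝕂 2) :
    (DXmat ![X1, X2] z).det =
      totalD X1 0 z * totalD X2 1 z - totalD X2 0 z * totalD X1 1 z := by
  simp [Matrix.det_fin_two, DXmat, totalD]

/-- The linear system `D_i Y = Σ_j (D_i X^j) Y_{X^j}` defining `Y_X`. -/
lemma YX_system {X1 X2 : Pt 𝕂 2 → 𝕂} (Yf : Pt 𝕂 2 → 𝕂) {z : JetP 𝕂 2}
    (h : (DXmat ![X1, X2] z).det ≠ 0) (i : Fin 2) :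
    totalD X1 i z * YX ![X1, X2] Yf z 0 + totalD X2 i z * YX ![X1, X2] Yf z 1
      = totalD Yf i z := by
  have h1 : (DXmat ![X1, X2] z).mulVec (YX ![X1, X2] Yf z) = DYvec Yf z := by
    rw [YX, Matrix.mulVec_mulVec, Matrix.mul_nonsing_inv _ (isUnit_iff_ne_zero.mpr h),
      Matrix.one_mulVec]
  simpa [Matrix.mulVec, dotProduct, Fin.sum_univ_two, DXmat, DYvec, totalD] using congrFun h1 i

lemma differentiableAt_det {X1 X2 : Pt 𝕂 2 → 𝕂} {w : Jet2 𝕂 2}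
    (hX1 : AnalyticAt 𝕂 X1 (w.1.1, w.1.2.1)) (hX2 : AnalyticAt 𝕂 X2 (w.1.1, w.1.2.1)) :
    DifferentiableAt 𝕂 (fun z => (DXmat ![X1, X2] z).det) w.1 := by
  simp only [DXmat_det]
  have h1 := differentiableAt_totalD hX1
  have h2 := differentiableAt_totalD hX2
  exact ((h1 0).mul (h2 1)).sub ((h2 0).mul (h1 1))

lemma differentiableAt_YX {X1 X2 Yf : Pt 𝕂 2 → 𝕂} {w : Jet2 𝕂 2}
    (hX1 : AnalyticAt 𝕂 X1 (w.1.1, w.1.2.1)) (hX2 : AnalyticAt 𝕂 X2 (w.1.1, w.1.2.1))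
    (hY : AnalyticAt 𝕂 Yf (w.1.1, w.1.2.1)) (hdet : (DXmat ![X1, X2] w.1).det ≠ 0)
    (j : Fin 2) :
    DifferentiableAt 𝕂 (fun z => YX ![X1, X2] Yf z j) w.1 := by
  have h0 := (differentiableAt_det hX1 hX2).inv hdet
  have h1 := differentiableAt_totalD hX1
  have h2 := differentiableAt_totalD hX2
  have h3 := differentiableAt_totalD hY
  fin_cases j
  · simp only [Fin.zero_eta, YX_formula]
    exact h0.mul (((h2 1).mul (h3 0)).sub ((h2 0).mul (h3 1)))
  · simp only [Fin.mk_one, YX_formula]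
    exact h0.mul (((h1 0).mul (h3 1)).sub ((h1 1).mul (h3 0)))

/-- `D_k` applied to the linear system `D_i Y = Σ_j (D_i X^j) Y_{X^j}`. -/
lemma Dk_YX_relation {X1 X2 Yf : Pt 𝕂 2 → 𝕂} {w : Jet2 𝕂 2}
    (hX1 : AnalyticAt 𝕂 X1 (w.1.1, w.1.2.1)) (hX2 : AnalyticAt 𝕂 X2 (w.1.1, w.1.2.1))
    (hY : AnalyticAt 𝕂 Yf (w.1.1, w.1.2.1)) (hdet : (DXmat ![X1, X2] w.1).det ≠ 0)
    (i k : Fin 2) :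
    (Dk (totalD X1 i) k w * YX ![X1, X2] Yf w.1 0
        + Dk (totalD X2 i) k w * YX ![X1, X2] Yf w.1 1)
      + (totalD X1 i w.1 * Dk (fun z => YX ![X1, X2] Yf z 0) k w
        + totalD X2 i w.1 * Dk (fun z => YX ![X1, X2] Yf z 1) k w)
      = Dk (totalD Yf i) k w := by
  -- The system holds on a whole neighbourhood, so both sides have the same derivative.
  have hev : (fun z => totalD X1 i z * YX ![X1, X2] Yf z 0 + totalD X2 i z * YX ![X1, X2] Yf z 1)
      =ᶠ[nhds w.1] totalD Yf i := by
    filter_upwards [(differentiableAt_det hX1 hX2).continuousAt.eventually_ne hdet] with z hz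
    exact YX_system Yf hz i
  have hl := ((differentiableAt_totalD hX1 i).hasFDerivAt.mul
      (differentiableAt_YX hX1 hX2 hY hdet 0).hasFDerivAt).add
    ((differentiableAt_totalD hX2 i).hasFDerivAt.mul
      (differentiableAt_YX hX1 hX2 hY hdet 1).hasFDerivAt)
  have h := congrArg (fun L => L (dirD k w)) (hl.fderiv.symm.trans hev.fderiv_eq)
  simp only [add_apply, smul_apply, smul_eq_mul] at h
  simp only [Dk_eq_fderiv]
  linear_combination h

/-- If `(u, v)` solves the invertible linear system with rows `(a₀, b₀)`, `(a₁, b₁)` and right-hand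
side `(c₀, c₁)`, then a further equation `a u + b v = c` is equivalent to the vanishing of the
bordered determinant. -/
lemma cramer_iff {a₀ b₀ c₀ a₁ b₁ c₁ a b c u v : 𝕂} (hd : a₀ * b₁ - b₀ * a₁ ≠ 0)
    (h₀ : a₀ * u + b₀ * v = c₀) (h₁ : a₁ * u + b₁ * v = c₁) :
    a * u + b * v = c ↔ 0 = Matrix.det !![a₀, a₁, a; b₀, b₁, b; c₀, c₁, c] := by
  have e : Matrix.det !![a₀, a₁, a; b₀, b₁, b; c₀, c₁, c]
      = (a₀ * b₁ - b₀ * a₁) * (c - (a * u + b * v)) := by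
    subst h₀ h₁
    simp only [Matrix.det_fin_three, Matrix.of_apply, Matrix.cons_val', Matrix.cons_val_zero,
      Matrix.cons_val_one, Matrix.cons_val, Matrix.cons_val_fin_one]
    ring
  rw [e, zero_eq_mul, or_iff_right hd, sub_eq_zero, eq_comm]

lemma mulVec_eq_zero_iff {A : Matrix (Fin n) (Fin n) 𝕂} (hA : IsUnit A.det) (v : Fin n → 𝕂) :
    A.mulVec v = 0 ↔ v = 0 := by
  refine ⟨fun h => ?_, fun h => by simp [h]⟩
  have := congrArg A⁻¹.mulVec h
  rwa [Matrix.mulVec_mulVec, Matrix.nonsing_inv_mul _ hA, Matrix.one_mulVec,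
    Matrix.mulVec_zero] at this

/-- All second derivatives `Y_{X^j X^k}` vanish iff all total derivatives of `Y_X` do. -/
lemma YXX_zero_iff_Dk {Xf : Fin n → Pt 𝕂 n → 𝕂} {Yf : Pt 𝕂 n → 𝕂} {w : Jet2 𝕂 n}
    (hinv : IsUnit (DXmat Xf w.1).det) :
    (∀ j k, YXX Xf Yf j w k = 0) ↔ ∀ j k, Dk (fun z => YX Xf Yf z j) k w = 0 := by
  refine forall_congr' fun j => ?_
  have h := mulVec_eq_zero_iff (A := (DXmat Xf w.1)⁻¹)
    (Matrix.isUnit_nonsing_inv_det _ hinv) (fun i => Dk (fun z => YX Xf Yf z j) i w)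
  simpa only [funext_iff, Pi.zero_apply, YXX] using h

/-- The determinantal form of flatness: for all `i`, `k` the determinant with columns `D_1`,
`D_2`, `D_k D_i` applied to `(X^1, X^2, Y)` vanishes. -/
lemma flat_iff_det {X1 X2 Yf : Pt 𝕂 2 → 𝕂} {w : Jet2 𝕂 2}
    (hX1 : AnalyticAt 𝕂 X1 (w.1.1, w.1.2.1)) (hX2 : AnalyticAt 𝕂 X2 (w.1.1, w.1.2.1))
    (hY : AnalyticAt 𝕂 Yf (w.1.1, w.1.2.1)) (hinv : IsUnit (DXmat ![X1, X2] w.1).det) :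
    (∀ j k, YXX ![X1, X2] Yf j w k = 0) ↔ ∀ i k : Fin 2,
      0 = Matrix.det !![totalD X1 0 w.1, totalD X1 1 w.1, Dk (totalD X1 i) k w;
                        totalD X2 0 w.1, totalD X2 1 w.1, Dk (totalD X2 i) k w;
                        totalD Yf 0 w.1, totalD Yf 1 w.1, Dk (totalD Yf i) k w] := by
  have hdet := hinv.ne_zero
  have hd := hdet
  rw [DXmat_det] at hd
  simp only [← cramer_iff hd (YX_system Yf hdet 0) (YX_system Yf hdet 1)]
  rw [YXX_zero_iff_Dk hinv]
  have R := Dk_YX_relation hX1 hX2 hY hdet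
  constructor
  · intro h i k
    have := R i k
    rw [h 0 k, h 1 k] at this
    linear_combination this
  · intro h j k
    have s (i : Fin 2) : totalD X1 i w.1 * Dk (fun z => YX ![X1, X2] Yf z 0) k w
        + totalD X2 i w.1 * Dk (fun z => YX ![X1, X2] Yf z 1) k w = 0 := by
      linear_combination R i k - h i k
    have hv := (mulVec_eq_zero_iff hinv (fun j => Dk (fun z => YX ![X1, X2] Yf z j) k w)).mp (by
      ext i
      simpa [Matrix.mulVec, dotProduct, Fin.sum_univ_two, DXmat, totalD] using s i)
    exact congrFun hv j

/-- For n = 2, at a second-order jet point where DX is invertible and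
Δ(x¹|x²|y) ≠ 0, the flatness conditions Y_{XʲXᵏ} = 0 are equivalent to the three explicit
determinantal cubic equations (E1), (E2), (E3). -/
theorem flatness_iff_three_determinantal_equations
    (U : Set (Pt 𝕂 2)) (hU : IsOpen U) (hU0 : (0 : Pt 𝕂 2) ∈ U)
    (X1 X2 Yf : Pt 𝕂 2 → 𝕂)
    (hX1 : AnalyticOnNhd 𝕂 X1 U) (hX2 : AnalyticOnNhd 𝕂 X2 U) (hY : AnalyticOnNhd 𝕂 Yf U)
    (w : Jet2 𝕂 2) (hw : (w.1.1, w.1.2.1) ∈ U)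
    (hq : ∀ j k, w.2 j k = w.2 k j)
    (hinv : IsUnit (DXmat ![X1, X2] w.1).det)
    (hΔ : Det3 X1 X2 Yf c1 c2 cy (w.1.1, w.1.2.1) ≠ 0) :
    (∀ j k : Fin 2, YXX ![X1, X2] Yf j w k = 0) ↔
      ((0 = w.2 0 0 * Det3 X1 X2 Yf c1 c2 cy (w.1.1, w.1.2.1)
          + Det3 X1 X2 Yf c1 c2 c11 (w.1.1, w.1.2.1)
          + w.1.2.2 0 * (2 * Det3 X1 X2 Yf c1 c2 c1y (w.1.1, w.1.2.1)
              - Det3 X1 X2 Yf c11 c2 cy (w.1.1, w.1.2.1))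
          + w.1.2.2 1 * (- Det3 X1 X2 Yf c1 c11 cy (w.1.1, w.1.2.1))
          + w.1.2.2 0 * w.1.2.2 0 * (Det3 X1 X2 Yf c1 c2 cyy (w.1.1, w.1.2.1)
              - 2 * Det3 X1 X2 Yf c1y c2 cy (w.1.1, w.1.2.1))
          + w.1.2.2 0 * w.1.2.2 1 * (-2 * Det3 X1 X2 Yf c1 c1y cy (w.1.1, w.1.2.1))
          + w.1.2.2 0 * w.1.2.2 0 * w.1.2.2 0 * (- Det3 X1 X2 Yf cyy c2 cy (w.1.1, w.1.2.1))
          + w.1.2.2 0 * w.1.2.2 0 * w.1.2.2 1 * (- Det3 X1 X2 Yf c1 cyy cy (w.1.1, w.1.2.1)))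
      ∧ (0 = w.2 0 1 * Det3 X1 X2 Yf c1 c2 cy (w.1.1, w.1.2.1)
          + Det3 X1 X2 Yf c1 c2 c12 (w.1.1, w.1.2.1)
          + w.1.2.2 0 * (Det3 X1 X2 Yf c1 c2 c2y (w.1.1, w.1.2.1)
              - Det3 X1 X2 Yf c12 c2 cy (w.1.1, w.1.2.1))
          + w.1.2.2 1 * (Det3 X1 X2 Yf c1 c2 c1y (w.1.1, w.1.2.1)
              - Det3 X1 X2 Yf c1 c12 cy (w.1.1, w.1.2.1))
          + w.1.2.2 0 * w.1.2.2 0 * (- Det3 X1 X2 Yf c2y c2 cy (w.1.1, w.1.2.1))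
          + w.1.2.2 0 * w.1.2.2 1 * (Det3 X1 X2 Yf c1 c2 cyy (w.1.1, w.1.2.1)
              - Det3 X1 X2 Yf c1y c2 cy (w.1.1, w.1.2.1)
              - Det3 X1 X2 Yf c1 c2y cy (w.1.1, w.1.2.1))
          + w.1.2.2 1 * w.1.2.2 1 * (- Det3 X1 X2 Yf c1 c1y cy (w.1.1, w.1.2.1))
          + w.1.2.2 0 * w.1.2.2 0 * w.1.2.2 1 * (- Det3 X1 X2 Yf cyy c2 cy (w.1.1, w.1.2.1))
          + w.1.2.2 0 * w.1.2.2 1 * w.1.2.2 1 * (- Det3 X1 X2 Yf c1 cyy cy (w.1.1, w.1.2.1)))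
      ∧ (0 = w.2 1 1 * Det3 X1 X2 Yf c1 c2 cy (w.1.1, w.1.2.1)
          + Det3 X1 X2 Yf c1 c2 c22 (w.1.1, w.1.2.1)
          + w.1.2.2 0 * (- Det3 X1 X2 Yf c22 c2 cy (w.1.1, w.1.2.1))
          + w.1.2.2 1 * (2 * Det3 X1 X2 Yf c1 c2 c2y (w.1.1, w.1.2.1)
              - Det3 X1 X2 Yf c1 c22 cy (w.1.1, w.1.2.1))
          + w.1.2.2 0 * w.1.2.2 1 * (-2 * Det3 X1 X2 Yf c2y c2 cy (w.1.1, w.1.2.1))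
          + w.1.2.2 1 * w.1.2.2 1 * (Det3 X1 X2 Yf c1 c2 cyy (w.1.1, w.1.2.1)
              - 2 * Det3 X1 X2 Yf c1 c2y cy (w.1.1, w.1.2.1))
          + w.1.2.2 0 * w.1.2.2 1 * w.1.2.2 1 * (- Det3 X1 X2 Yf cyy c2 cy (w.1.1, w.1.2.1))
          + w.1.2.2 1 * w.1.2.2 1 * w.1.2.2 1 * (- Det3 X1 X2 Yf c1 cyy cy (w.1.1, w.1.2.1)))) := by
  have a1 := hX1 _ hw
  have a2 := hX2 _ hw
  have a3 := hY _ hw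
  have sym {f : Pt 𝕂 2 → 𝕂} (hf : AnalyticAt 𝕂 f (w.1.1, w.1.2.1)) :
      px (px f 1) 0 (w.1.1, w.1.2.1) = px (px f 0) 1 (w.1.1, w.1.2.1) :=
    fderiv_fderiv_comm hf _ _
  rw [flat_iff_det a1 a2 a3 hinv]
  simp only [Fin.forall_fin_two, Dk_totalD a1, Dk_totalD a2, Dk_totalD a3, sym a1, sym a2, sym a3,
    hq 1 0, Det3, c1, c2, cy, c11, c12, c1y, c22, c2y, cyy, totalD, Matrix.det_fin_three,
    Matrix.of_apply, Matrix.cons_val', Matrix.cons_val_zero, Matrix.cons_val_one,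
    Matrix.cons_val, Matrix.cons_val_fin_one]
  -- The cases `(i, k) = (0, 1)` and `(1, 0)` give the same equation, by symmetry.
  constructor
  · rintro ⟨⟨h00, h01⟩, h10, h11⟩
    exact ⟨by linear_combination h00, by linear_combination h01, by linear_combination h11⟩
  · rintro ⟨h00, h01, h11⟩
    exact ⟨⟨by linear_combination h00, by linear_combination h01⟩,
      by linear_combination h01, by linear_combination h11⟩
end
end
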